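/- Let n ≥ 1, let x ∈ (0,1), and let ρ₁, ρ₂ be density matrices (n×n complex positive semidefinite matrices of trace 1), and set ρ_Av := x·ρ₁ + (1−x)·ρ₂. Then S(ρ_Av) − x·S(ρ₁) − (1−x)·S(ρ₂) ≥ −2·log( Tr[ (x·√ρ₁ + (1−x)·√ρ₂) · √ρ_Av ] ). -/

import Mathlib

open Matrix ComplexOrder

/-- Apply a real function to a Hermitian matrix via the spectral decomposition
`A = U D U*`: the result is `U (f(D)) U*` where `f` acts on the diagonal. -/
noncomputable def mfun {m : Type*} [Fintype m] [DecidableEq m]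
    (f : ℝ → ℝ) (A : Matrix m m ℂ) : Matrix m m ℂ :=
  if hA : A.IsHermitian then hA.cfc f else 0

/-- Matrix logarithm via spectral decomposition, with the convention `log 0 = 0`
(note `Real.log 0 = 0`). -/
noncomputable def matLog {m : Type*} [Fintype m] [DecidableEq m]
    (A : Matrix m m ℂ) : Matrix m m ℂ :=
  mfun Real.log A

/-- The positive semidefinite square root of a positive semidefinite matrix,
via spectral decomposition. -/
noncomputable def matSqrt {m : Type*} [Fintype m] [DecidableEq m]
    (A : Matrix m m ℂ) : Matrix m m ℂ :=
  mfun Real.sqrt A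

/-- Real power of a (positive semidefinite / positive definite) matrix via spectral
decomposition. -/
noncomputable def matRpow {m : Type*} [Fintype m] [DecidableEq m]
    (t : ℝ) (A : Matrix m m ℂ) : Matrix m m ℂ :=
  mfun (fun u => u ^ t) A

/-- The von Neumann entropy `S(ρ) = -Tr(ρ log ρ)`. -/
noncomputable def vnEntropy {m : Type*} [Fintype m] [DecidableEq m]
    (ρ : Matrix m m ℂ) : ℝ :=
  -(Matrix.trace (ρ * matLog ρ)).re

/-- The quantum relative entropy `H(ρ, γ) = Tr(ρ (log ρ - log γ))`. -/
noncomputable def relEntropy {m : Type*} [Fintype m] [DecidableEq m]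
    (ρ γ : Matrix m m ℂ) : ℝ :=
  (Matrix.trace (ρ * (matLog ρ - matLog γ))).re

/-- The trace norm of a Hermitian matrix: the sum of the absolute values of its
eigenvalues. -/
noncomputable def traceNorm {m : Type*} [Fintype m] [DecidableEq m]
    (A : Matrix m m ℂ) : ℝ :=
  if hA : A.IsHermitian then ∑ i, |hA.eigenvalues i| else 0

/-- A density matrix: positive semidefinite with trace 1. -/
def IsDensity {m : Type*} [Fintype m] [DecidableEq m] (ρ : Matrix m m ℂ) : Prop :=
  ρ.PosSemidef ∧ Matrix.trace ρ = 1

/-- The binary entropy `h(x) = -x log x - (1-x) log (1-x)`. -/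
noncomputable def binEntropy (x : ℝ) : ℝ :=
  -(x * Real.log x) - (1 - x) * Real.log (1 - x)

/-- The Renyi relative entropy `H_a(ρ,γ) = (a-1)⁻¹ log Tr(ρ^a γ^(1-a))`. -/
noncomputable def renyiRel {m : Type*} [Fintype m] [DecidableEq m]
    (a : ℝ) (ρ γ : Matrix m m ℂ) : ℝ :=
  (a - 1)⁻¹ * Real.log (Matrix.trace (matRpow a ρ * matRpow (1 - a) γ)).re

/-- The sandwiched Renyi relative entropy
`H̃_a(ρ,γ) = (a-1)⁻¹ log Tr((γ^((1-a)/(2a)) ρ γ^((1-a)/(2a)))^a)`. -/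
noncomputable def sandRenyiRel {m : Type*} [Fintype m] [DecidableEq m]
    (a : ℝ) (ρ γ : Matrix m m ℂ) : ℝ :=
  (a - 1)⁻¹ * Real.log
    (Matrix.trace (matRpow a
      (matRpow ((1 - a) / (2 * a)) γ * ρ * matRpow ((1 - a) / (2 * a)) γ))).re

/-!
Let `σ = ∑ wₖ ρₖ` be the average state. The entropy gap equals `∑ wₖ H(ρₖ, σ)`, where `H` is the
relative entropy. If `pᵢ, uᵢ` and `qⱼ, vⱼ` are the eigenvalues and eigenvectors of `ρ` and `σ`,
then with the weights `Pᵢⱼ = pᵢ |⟨uᵢ, vⱼ⟩|²`, of total mass `1`,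
`H(ρ, σ) = -2 ∑ Pᵢⱼ log (√qⱼ / √pᵢ)` and `Tr (√ρ √σ) = ∑ Pᵢⱼ (√qⱼ / √pᵢ)`,
so Jensen's inequality for `log` gives `H(ρ, σ) ≥ -2 log Tr (√ρ √σ)`; a second application, to the
weights `wₖ`, gives the bound. Both applications need positive arguments of `log` at nonzero
weights, and these come from the inclusion `ker σ ⊆ ker ρₖ`, valid whenever `wₖ ≠ 0`.
-/

section Jensen

variable {ι : Type*} {s : Finset ι} {w z : ι → ℝ}

theorem sum_mul_pos_of_sum_ne_zero (hw : ∀ i ∈ s, 0 ≤ w i) (hsum : ∑ i ∈ s, w i ≠ 0)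
    (hz : ∀ i ∈ s, w i ≠ 0 → 0 < z i) : 0 < ∑ i ∈ s, w i * z i := by
  have hterm_pos : ∀ i ∈ s, w i ≠ 0 → 0 < w i * z i := fun i hi hwi ↦
    mul_pos ((hw i hi).lt_of_ne' hwi) (hz i hi hwi)
  obtain ⟨i, hi, hwi⟩ : ∃ i ∈ s, w i ≠ 0 := Finset.exists_ne_zero_of_sum_ne_zero hsum
  refine Finset.sum_pos' (fun j hj ↦ ?_) ⟨i, hi, hterm_pos i hi hwi⟩
  rcases eq_or_ne (w j) 0 with hwj | hwj
  · simp only [hwj, zero_mul, le_refl]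
  · exact (hterm_pos j hj hwj).le

theorem sum_mul_log_le_log_sum_mul (hw : ∀ i ∈ s, 0 ≤ w i) (hw1 : ∑ i ∈ s, w i = 1)
    (hz : ∀ i ∈ s, w i ≠ 0 → 0 < z i) :
    ∑ i ∈ s, w i * Real.log (z i) ≤ Real.log (∑ i ∈ s, w i * z i) := by
  have sum_support (y : ι → ℝ) : ∑ i ∈ s with w i ≠ 0, w i * y i = ∑ i ∈ s, w i * y i :=
    Finset.sum_filter_of_ne fun _ _ ↦ left_ne_zero_of_mul
  rw [← sum_support, ← sum_support]
  refine strictConcaveOn_log_Ioi.concaveOn.le_map_sum (fun i hi ↦ hw i (Finset.mem_filter.1 hi).1)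
    ((Finset.sum_filter_ne_zero s).trans hw1) fun i hi ↦ ?_
  obtain ⟨his, hwi⟩ := Finset.mem_filter.1 hi
  exact hz i his hwi

end Jensen

theorem mulVec_eq_zero_of_sum_mulVec_eq_zero {ι m 𝕜 : Type*} [Fintype m] [RCLike 𝕜] {s : Finset ι}
    {A : ι → Matrix m m 𝕜} (hA : ∀ k ∈ s, (A k).PosSemidef) {v : m → 𝕜}
    (hv : (∑ k ∈ s, A k) *ᵥ v = 0) {k : ι} (hk : k ∈ s) : A k *ᵥ v = 0 := by
  have hsum : ∑ l ∈ s, star v ⬝ᵥ A l *ᵥ v = 0 := by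
    rw [← dotProduct_sum, ← Matrix.sum_mulVec, hv, dotProduct_zero]
  have hzero := (Finset.sum_eq_zero_iff_of_nonneg fun l hl ↦
    (hA l hl).dotProduct_mulVec_nonneg v).1 hsum k hk
  exact ((hA k hk).dotProduct_mulVec_zero_iff v).1 hzero

theorem re_trace_sum_smul_mul {ι m : Type*} [Fintype ι] [Fintype m] (w : ι → ℝ)
    (X : ι → Matrix m m ℂ) (Y : Matrix m m ℂ) :
    ((∑ k, w k • X k) * Y).trace.re = ∑ k, w k * (X k * Y).trace.re := by
  simp only [Matrix.sum_mul, Matrix.smul_mul, Matrix.trace_sum, Matrix.trace_smul, Complex.re_sum,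
    Complex.smul_re, smul_eq_mul]

theorem trace_diagonal_mul_mul_diagonal_mul_conjTranspose {l m R : Type*} [Fintype l] [Fintype m]
    [DecidableEq l] [DecidableEq m] [CommSemiring R] [StarRing R] (d : l → R) (e : m → R)
    (W : Matrix l m R) :
    (diagonal d * (W * (diagonal e * Wᴴ))).trace =
      ∑ i, ∑ j, d i * e j * (W i j * star (W i j)) := by
  refine Finset.sum_congr rfl fun i _ ↦ ?_
  rw [Matrix.diag_apply, Matrix.diagonal_mul, Matrix.mul_apply, Finset.mul_sum]
  refine Finset.sum_congr rfl fun j _ ↦ ?_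
  rw [Matrix.diagonal_mul, Matrix.conjTranspose_apply]
  ring

variable {m : Type*} [Fintype m] [DecidableEq m]

section FunctionalCalculus

theorem mfun_eq_cfc (f : ℝ → ℝ) (A : Matrix m m ℂ) : mfun f A = cfc f A := by
  by_cases hA : A.IsHermitian
  · rw [mfun, dif_pos hA, hA.cfc_eq]
  · rw [mfun, dif_neg hA]
    exact (cfc_apply_of_not_predicate A hA).symm

theorem mfun_mul (f g : ℝ → ℝ) (A : Matrix m m ℂ) :
    mfun (fun u ↦ f u * g u) A = mfun f A * mfun g A := by
  simp only [mfun_eq_cfc]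
  exact cfc_mul f g A (A.finite_real_spectrum.continuousOn f)
    (A.finite_real_spectrum.continuousOn g)

theorem mfun_id {A : Matrix m m ℂ} (hA : A.IsHermitian) : mfun (fun u ↦ u) A = A :=
  (mfun_eq_cfc _ A).trans (cfc_id' ℝ A hA)

theorem mfun_one {A : Matrix m m ℂ} (hA : A.IsHermitian) : mfun (fun _ ↦ 1) A = 1 :=
  (mfun_eq_cfc _ A).trans (cfc_const_one ℝ A hA)

theorem mfun_eq_mul_diagonal_mul_star {A : Matrix m m ℂ} (hA : A.IsHermitian) (f : ℝ → ℝ) :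
    mfun f A = (hA.eigenvectorUnitary : Matrix m m ℂ) *
      diagonal (fun i ↦ (f (hA.eigenvalues i) : ℂ)) *
        star (hA.eigenvectorUnitary : Matrix m m ℂ) := by
  rw [mfun, dif_pos hA, IsHermitian.cfc, Unitary.conjStarAlgAut_apply]
  rfl

end FunctionalCalculus

section EigenvectorOverlap

variable {A B : Matrix m m ℂ}

/-- The squared overlaps `|⟨uᵢ, vⱼ⟩|²` of the eigenvectors `uᵢ` of `A` and `vⱼ` of `B`, taken in
the eigenbases chosen by `Matrix.IsHermitian.eigenvectorBasis`. With eigenvalues `pᵢ`, `qⱼ`, the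
arrays `pᵢ |⟨uᵢ, vⱼ⟩|²` and `qⱼ |⟨uᵢ, vⱼ⟩|²` are the Nussbaum–Szkoła distributions of the pair
`(A, B)`, which reduce traces of products `f(A) g(B)` to classical sums. -/
noncomputable def eigenvectorOverlap (hA : A.IsHermitian) (hB : B.IsHermitian) (i j : m) : ℝ :=
  ‖inner ℂ (hA.eigenvectorBasis i) (hB.eigenvectorBasis j)‖ ^ 2

theorem eigenvectorOverlap_nonneg (hA : A.IsHermitian) (hB : B.IsHermitian) (i j : m) :
    0 ≤ eigenvectorOverlap hA hB i j :=
  sq_nonneg _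

theorem star_mul_eigenvectorUnitary_apply (hA : A.IsHermitian) (hB : B.IsHermitian) (i j : m) :
    (star (hA.eigenvectorUnitary : Matrix m m ℂ) * (hB.eigenvectorUnitary : Matrix m m ℂ)) i j =
      inner ℂ (hA.eigenvectorBasis i) (hB.eigenvectorBasis j) := by
  simp only [Matrix.mul_apply, Matrix.star_apply, IsHermitian.eigenvectorUnitary_apply,
    PiLp.inner_apply, RCLike.inner_apply, RCLike.star_def, mul_comm]

theorem re_trace_mfun_mul_mfun (hA : A.IsHermitian) (hB : B.IsHermitian) (f g : ℝ → ℝ) :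
    (mfun f A * mfun g B).trace.re = ∑ i, ∑ j,
      f (hA.eigenvalues i) * g (hB.eigenvalues j) * eigenvectorOverlap hA hB i j := by
  let U : Matrix m m ℂ := hA.eigenvectorUnitary.1
  let V : Matrix m m ℂ := hB.eigenvectorUnitary.1
  let D : Matrix m m ℂ := diagonal fun i ↦ (f (hA.eigenvalues i) : ℂ)
  let E : Matrix m m ℂ := diagonal fun j ↦ (g (hB.eigenvalues j) : ℂ)
  have hcycle : (mfun f A * mfun g B).trace =
      (D * ((star U * V) * (E * (star U * V)ᴴ))).trace := by
    rw [mfun_eq_mul_diagonal_mul_star hA, mfun_eq_mul_diagonal_mul_star hB, Matrix.mul_assoc,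
      Matrix.mul_assoc, Matrix.trace_mul_comm, ← star_eq_conjTranspose]
    simp only [U, V, D, E, Matrix.mul_assoc, star_mul, star_star]
  rw [hcycle, trace_diagonal_mul_mul_diagonal_mul_conjTranspose]
  simp only [U, V, star_mul_eigenvectorUnitary_apply, RCLike.star_def, Complex.mul_conj',
    eigenvectorOverlap, Complex.re_sum, ← Complex.ofReal_mul, ← Complex.ofReal_pow,
    Complex.ofReal_re]

theorem eigenvalues_mul_eigenvectorOverlap_eq_zero (hA : A.IsHermitian) (hB : B.IsHermitian)
    (hker : ∀ v, B *ᵥ v = 0 → A *ᵥ v = 0) (i : m) {j : m} (hj : hB.eigenvalues j = 0) :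
    hA.eigenvalues i * eigenvectorOverlap hA hB i j = 0 := by
  have hAv : A *ᵥ ⇑(hB.eigenvectorBasis j) = 0 :=
    hker _ (by rw [hB.mulVec_eigenvectorBasis, hj, zero_smul])
  have hinner : (hA.eigenvalues i : ℂ) *
      inner ℂ (hA.eigenvectorBasis i) (hB.eigenvectorBasis j) = 0 :=
    calc
      _ = ⇑(hB.eigenvectorBasis j) ⬝ᵥ star (A *ᵥ ⇑(hA.eigenvectorBasis i)) := by
        rw [hA.mulVec_eigenvectorBasis, star_smul, star_trivial, dotProduct_smul,
          EuclideanSpace.inner_eq_star_dotProduct, Complex.real_smul]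
      _ = star ⇑(hA.eigenvectorBasis i) ⬝ᵥ (A *ᵥ ⇑(hB.eigenvectorBasis j)) := by
        rw [star_mulVec, hA.eq, dotProduct_comm, dotProduct_mulVec]
      _ = 0 := by rw [hAv, dotProduct_zero]
  rcases mul_eq_zero.1 hinner with hi | hij
  · rw [Complex.ofReal_eq_zero.1 hi, zero_mul]
  · rw [eigenvectorOverlap, hij, norm_zero, zero_pow two_ne_zero, mul_zero]

theorem sum_eigenvalues_mul_eigenvectorOverlap (hA : A.IsHermitian) (hB : B.IsHermitian) :
    ∑ i, ∑ j, hA.eigenvalues i * eigenvectorOverlap hA hB i j = A.trace.re := by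
  simpa only [mfun_id hA, mfun_one hB, mul_one] using
    (re_trace_mfun_mul_mfun hA hB (fun u ↦ u) (fun _ ↦ 1)).symm

theorem relEntropy_eq_sum (hA : A.IsHermitian) (hB : B.IsHermitian) :
    relEntropy A B = ∑ i, ∑ j, hA.eigenvalues i * eigenvectorOverlap hA hB i j *
      (Real.log (hA.eigenvalues i) - Real.log (hB.eigenvalues j)) := by
  have hAA : (A * matLog A).trace.re = ∑ i, ∑ j, hA.eigenvalues i *
      Real.log (hA.eigenvalues i) * eigenvectorOverlap hA hB i j := by
    simpa only [mfun_mul, mfun_id hA, mfun_one hB, mul_one, matLog] using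
      re_trace_mfun_mul_mfun hA hB (fun u ↦ u * Real.log u) (fun _ ↦ 1)
  have hAB : (A * matLog B).trace.re = ∑ i, ∑ j, hA.eigenvalues i *
      Real.log (hB.eigenvalues j) * eigenvectorOverlap hA hB i j := by
    simpa only [mfun_id hA, matLog] using re_trace_mfun_mul_mfun hA hB (fun u ↦ u) Real.log
  rw [relEntropy, Matrix.mul_sub, Matrix.trace_sub, Complex.sub_re, hAA, hAB]
  simp only [← Finset.sum_sub_distrib]
  refine Finset.sum_congr rfl fun i _ ↦ Finset.sum_congr rfl fun j _ ↦ ?_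
  ring

theorem re_trace_matSqrt_mul_matSqrt_eq_sum (hA : A.IsHermitian) (hB : B.IsHermitian) :
    (matSqrt A * matSqrt B).trace.re = ∑ i, ∑ j,
      hA.eigenvalues i * eigenvectorOverlap hA hB i j *
        (√(hB.eigenvalues j) / √(hA.eigenvalues i)) := by
  rw [matSqrt, matSqrt, re_trace_mfun_mul_mfun hA hB]
  refine Finset.sum_congr rfl fun i _ ↦ Finset.sum_congr rfl fun j _ ↦ ?_
  calc √(hA.eigenvalues i) * √(hB.eigenvalues j) * eigenvectorOverlap hA hB i j
    _ = hA.eigenvalues i / √(hA.eigenvalues i) * √(hB.eigenvalues j) *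
        eigenvectorOverlap hA hB i j := by rw [Real.div_sqrt]
    _ = _ := by ring

end EigenvectorOverlap

section Fidelity

variable {A B : Matrix m m ℂ}

theorem sqrt_eigenvalues_div_sqrt_eigenvalues_pos (hA : A.PosSemidef) (hB : B.PosSemidef)
    (hker : ∀ v, B *ᵥ v = 0 → A *ᵥ v = 0) {i j : m}
    (hij : hA.isHermitian.eigenvalues i *
      eigenvectorOverlap hA.isHermitian hB.isHermitian i j ≠ 0) :
    0 < √(hB.isHermitian.eigenvalues j) / √(hA.isHermitian.eigenvalues i) := by
  have hp : 0 < hA.isHermitian.eigenvalues i :=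
    (hA.eigenvalues_nonneg i).lt_of_ne' (left_ne_zero_of_mul hij)
  have hq : 0 < hB.isHermitian.eigenvalues j := (hB.eigenvalues_nonneg j).lt_of_ne' fun hj ↦
    hij (eigenvalues_mul_eigenvectorOverlap_eq_zero hA.isHermitian hB.isHermitian hker i hj)
  positivity

theorem re_trace_matSqrt_mul_matSqrt_pos (hA : A.PosSemidef) (hA0 : A ≠ 0) (hB : B.PosSemidef)
    (hker : ∀ v, B *ᵥ v = 0 → A *ᵥ v = 0) : 0 < (matSqrt A * matSqrt B).trace.re := by
  rw [re_trace_matSqrt_mul_matSqrt_eq_sum hA.isHermitian hB.isHermitian, ← Fintype.sum_prod_type']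
  refine sum_mul_pos_of_sum_ne_zero (fun _ _ ↦ mul_nonneg (hA.eigenvalues_nonneg _)
    (eigenvectorOverlap_nonneg ..)) ?_ fun _ _ ↦
    sqrt_eigenvalues_div_sqrt_eigenvalues_pos hA hB hker
  have htrace : 0 < A.trace := hA.trace_nonneg.lt_of_ne' (mt hA.trace_eq_zero_iff.1 hA0)
  rw [Fintype.sum_prod_type, sum_eigenvalues_mul_eigenvectorOverlap]
  exact (Complex.pos_iff.1 htrace).1.ne'

theorem neg_two_mul_log_re_trace_matSqrt_le_relEntropy (hA : IsDensity A) (hB : B.PosSemidef)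
    (hker : ∀ v, B *ᵥ v = 0 → A *ᵥ v = 0) :
    -2 * Real.log (matSqrt A * matSqrt B).trace.re ≤ relEntropy A B := by
  obtain ⟨hApos, htrace⟩ := hA
  have hAh := hApos.isHermitian
  have hBh := hB.isHermitian
  let w (k : m × m) : ℝ := hAh.eigenvalues k.1 * eigenvectorOverlap hAh hBh k.1 k.2
  let z (k : m × m) : ℝ := √(hBh.eigenvalues k.2) / √(hAh.eigenvalues k.1)
  have hw : ∀ k ∈ Finset.univ, 0 ≤ w k := fun k _ ↦
    mul_nonneg (hApos.eigenvalues_nonneg k.1) (eigenvectorOverlap_nonneg ..)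
  have hw1 : ∑ k, w k = 1 := by
    rw [Fintype.sum_prod_type, sum_eigenvalues_mul_eigenvectorOverlap, htrace, Complex.one_re]
  have hz : ∀ k ∈ Finset.univ, w k ≠ 0 → 0 < z k := fun _ _ ↦
    sqrt_eigenvalues_div_sqrt_eigenvalues_pos hApos hB hker
  have hlog (k : m × m) : w k * (Real.log (hAh.eigenvalues k.1) - Real.log (hBh.eigenvalues k.2)) =
      -2 * (w k * Real.log (z k)) := by
    rcases eq_or_ne (w k) 0 with hk | hk
    · simp only [hk, zero_mul, mul_zero]
    · obtain ⟨hq, hp⟩ := div_ne_zero_iff.1 (hz k (Finset.mem_univ k) hk).ne'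
      rw [Real.log_div hq hp, Real.log_sqrt (hB.eigenvalues_nonneg k.2),
        Real.log_sqrt (hApos.eigenvalues_nonneg k.1)]
      ring
  calc -2 * Real.log (matSqrt A * matSqrt B).trace.re
    _ = -2 * Real.log (∑ k, w k * z k) := by
      rw [re_trace_matSqrt_mul_matSqrt_eq_sum hAh hBh, Fintype.sum_prod_type]
    _ ≤ -2 * ∑ k, w k * Real.log (z k) := by
      linarith only [sum_mul_log_le_log_sum_mul hw hw1 hz]
    _ = relEntropy A B := by
      rw [relEntropy_eq_sum hAh hBh, ← Fintype.sum_prod_type', Finset.mul_sum]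
      exact Finset.sum_congr rfl fun k _ ↦ (hlog k).symm

end Fidelity

section Ensemble

variable {ι : Type*} [Fintype ι]

theorem vnEntropy_sub_sum_mul_vnEntropy (w : ι → ℝ) (ρ : ι → Matrix m m ℂ) :
    vnEntropy (∑ k, w k • ρ k) - ∑ k, w k * vnEntropy (ρ k) =
      ∑ k, w k * relEntropy (ρ k) (∑ l, w l • ρ l) := by
  rw [vnEntropy, re_trace_sum_smul_mul]
  simp only [vnEntropy, relEntropy, Matrix.trace_sub, Complex.sub_re, mul_sub,
    Finset.sum_sub_distrib, mul_neg, Finset.sum_neg_distrib]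
  ring

theorem IsDensity.ne_zero {A : Matrix m m ℂ} (hA : IsDensity A) : A ≠ 0 := by
  rintro rfl
  exact zero_ne_one (Matrix.trace_zero m ℂ ▸ hA.2)

theorem concavity_lower_bound_sqrt_general {w : ι → ℝ} (hw : ∀ k, 0 ≤ w k) (hw1 : ∑ k, w k = 1)
    {ρ : ι → Matrix m m ℂ} (hρ : ∀ k, IsDensity (ρ k)) :
    vnEntropy (∑ k, w k • ρ k) - ∑ k, w k * vnEntropy (ρ k) ≥
      -2 * Real.log ((∑ k, w k • matSqrt (ρ k)) * matSqrt (∑ k, w k • ρ k)).trace.re := by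
  have hterm : ∀ k ∈ Finset.univ, (w k • ρ k).PosSemidef := fun k _ ↦ (hρ k).1.smul (hw k)
  have hσ : (∑ k, w k • ρ k).PosSemidef := posSemidef_sum _ hterm
  have hker : ∀ k, w k ≠ 0 → ∀ v, (∑ l, w l • ρ l) *ᵥ v = 0 → ρ k *ᵥ v = 0 := fun k hk v hv ↦ by
    have hsmul : w k • ρ k *ᵥ v = 0 := by
      rw [← smul_mulVec]
      exact mulVec_eq_zero_of_sum_mulVec_eq_zero hterm hv (Finset.mem_univ k)
    exact (smul_eq_zero.1 hsmul).resolve_left hk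
  rw [vnEntropy_sub_sum_mul_vnEntropy, re_trace_sum_smul_mul]
  set σ := ∑ k, w k • ρ k
  have hjensen := sum_mul_log_le_log_sum_mul (fun k _ ↦ hw k) hw1 (fun k _ hk ↦
    re_trace_matSqrt_mul_matSqrt_pos (hρ k).1 (hρ k).ne_zero hσ (hker k hk))
  calc -2 * Real.log (∑ k, w k * (matSqrt (ρ k) * matSqrt σ).trace.re)
    _ ≤ -2 * ∑ k, w k * Real.log (matSqrt (ρ k) * matSqrt σ).trace.re := by
      linarith only [hjensen]
    _ = ∑ k, w k * (-2 * Real.log (matSqrt (ρ k) * matSqrt σ).trace.re) := by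
      rw [Finset.mul_sum]
      exact Finset.sum_congr rfl fun k _ ↦ by ring
    _ ≤ ∑ k, w k * relEntropy (ρ k) σ := Finset.sum_le_sum fun k _ ↦ by
      rcases eq_or_ne (w k) 0 with hk | hk
      · simp only [hk, zero_mul, le_refl]
      · exact mul_le_mul_of_nonneg_left
          (neg_two_mul_log_re_trace_matSqrt_le_relEntropy (hρ k) hσ (hker k hk)) (hw k)

end Ensemble

theorem concavity_lower_bound_sqrt (n : ℕ) (hn : 1 ≤ n) (x : ℝ) (hx : x ∈ Set.Ioo (0:ℝ) 1)
    (ρ₁ ρ₂ : Matrix (Fin n) (Fin n) ℂ) (h1 : IsDensity ρ₁) (h2 : IsDensity ρ₂) :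
    vnEntropy (x • ρ₁ + (1 - x) • ρ₂) - x * vnEntropy ρ₁ - (1 - x) * vnEntropy ρ₂
      ≥ -2 * Real.log
          (Matrix.trace ((x • matSqrt ρ₁ + (1 - x) • matSqrt ρ₂)
            * matSqrt (x • ρ₁ + (1 - x) • ρ₂))).re := by
  simpa [Fin.sum_univ_two, sub_sub] using concavity_lower_bound_sqrt_general (w := ![x, 1 - x])
    (Fin.forall_fin_two.2 ⟨hx.1.le, sub_nonneg.2 hx.2.le⟩) (by simp) (ρ := ![ρ₁, ρ₂])
    (Fin.forall_fin_two.2 ⟨h1, h2⟩)
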